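/- arXiv:1610.00676 — 3 statements merged into one kernel-verified Lean document; each statement's English description precedes it below -/
import Mathlib

section
/- There exist a constant ε_γ > 0, disjoint finite subsets Ω₁ and Ω₂ of the unit circle {k ∈ ℝ² : |k| = 1}, and, for each j ∈ {1,2} and each k ∈ Ω_j, a smooth positive function γ_k defined on the set B_{ε_γ}(Id) of symmetric 2×2 real matrices R with |R − Id| < ε_γ, such that: (a) 5k ∈ ℤ² for every k ∈ Ω₁ ∪ Ω₂; (b) if k ∈ Ω_j then −k ∈ Ω_j and γ_k = γ_{−k}; (c) for each j ∈ {1,2} and every R ∈ B_{ε_γ}(Id) one has the identity R = (1/2) Σ_{k ∈ Ω_j} γ_k(R)² (k^⊥ ⊗ k^⊥); (d) for all k, k' ∈ Ω_j with k + k' ≠ 0 one has |k + k'| ≥ 1/2. -/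
noncomputable section

open scoped BigOperators

abbrev E2 : Type := EuclideanSpace ℝ (Fin 2)

/-- `k^⊥ = (-k₂, k₁)` -/
def perp (k : E2) : Fin 2 → ℝ := ![-(k 1), k 0]

/-- the 2×2 identity matrix, viewed as `Fin 2 → Fin 2 → ℝ` -/
def idMat : Fin 2 → Fin 2 → ℝ := fun i j => if i = j then 1 else 0

/-- the ball of radius `ε` around the identity, in the symmetric 2×2 real matrices -/
def symBall (ε : ℝ) : Set (Fin 2 → Fin 2 → ℝ) :=
  {R | (∀ i j, R i j = R j i) ∧ dist R idMat < ε}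

/-!
Let `k₁, k₂, k₃` be pairwise non-parallel vectors of the plane, and write a symmetric matrix as
`R = ∑ᵢ cᵢ kᵢ^⊥ ⊗ kᵢ^⊥`. Evaluating `R` as a bilinear form on `(k₂, k₃)` kills the terms containing
`k₂^⊥` and `k₃^⊥`, so that `c₁ = R(k₂, k₃) / ((k₁^⊥ · k₂) (k₁^⊥ · k₃))`, and cyclically. These
coefficients are linear in `R`; where they are positive at the identity they stay positive nearby,
and their square roots are smooth. Distributing each coefficient evenly over `±kᵢ` accounts for the
factor `1/2`. The twelve integer points on the circle of radius `5` split into two such families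
`±k₁, ±k₂, ±k₃`, according to which coordinate is odd.
-/

section Antipodal

variable {E ι : Type*} [AddCommGroup E]

/-- The family `±vᵢ`, indexed by a sign and an index of `v`. -/
def signed (v : ι → E) (s : ℤˣ × ι) : E := s.1 • v s.2

lemma neg_signed (v : ι → E) (s : ℤˣ × ι) : -signed v s = signed v (-s.1, s.2) := by
  simp [signed]

lemma signed_comp {F : Type*} [AddCommGroup F] (φ : E →+ F) (v : ι → E) :
    signed (φ ∘ v) = φ ∘ signed v := by
  funext s
  exact (map_zsmul φ (s.1 : ℤ) (v s.2)).symm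

lemma signed_injective_of_uncurry {J : Type*} {v : J → ι → E}
    (hv : Function.Injective (signed (Function.uncurry v))) (j : J) :
    Function.Injective (signed (v j)) :=
  hv.comp (g := signed (Function.uncurry v)) (f := fun s : ℤˣ × ι => (s.1, j, s.2))
    fun s t h => by simpa [Prod.ext_iff] using h

/-- The even function taking the value `c i` at `±vᵢ`, and `0` away from these points. It is only
meaningful when the points `±vᵢ` are pairwise distinct. -/
def evenExtend {β : Type*} [Zero β] (v : ι → E) (c : ι → β) : E → β :=
  Function.extend (signed v) (fun s => c s.2) 0

lemma evenExtend_signed {β : Type*} [Zero β] {v : ι → E} (hv : Function.Injective (signed v))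
    (c : ι → β) (s : ℤˣ × ι) : evenExtend v c (signed v s) = c s.2 :=
  hv.extend_apply _ _ s

variable [Fintype ι]

open Classical in
/-- The finite set `{±vᵢ}`. -/
def antipodalSet (v : ι → E) : Finset E := Finset.univ.image (signed v)

lemma mem_antipodalSet {v : ι → E} {k : E} : k ∈ antipodalSet v ↔ ∃ s, signed v s = k := by
  simp [antipodalSet]

lemma neg_mem_antipodalSet {v : ι → E} {k : E} (hk : k ∈ antipodalSet v) :
    -k ∈ antipodalSet v := by
  obtain ⟨s, rfl⟩ := mem_antipodalSet.1 hk
  exact mem_antipodalSet.2 ⟨_, (neg_signed v s).symm⟩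

lemma sum_antipodalSet {M : Type*} [AddCommMonoid M] {v : ι → E}
    (hv : Function.Injective (signed v)) (f : E → M) :
    ∑ k ∈ antipodalSet v, f k = ∑ s, f (signed v s) := by
  classical
  rw [antipodalSet, Finset.sum_image hv.injOn]

lemma disjoint_antipodalSet {J : Type*} {v : J → ι → E}
    (hv : Function.Injective (signed (Function.uncurry v))) {j j' : J} (hj : j ≠ j') :
    Disjoint (antipodalSet (v j)) (antipodalSet (v j')) := by
  refine Finset.disjoint_left.2 fun k hk hk' => hj ?_
  obtain ⟨s, rfl⟩ := mem_antipodalSet.1 hk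
  obtain ⟨s', h⟩ := mem_antipodalSet.1 hk'
  have hs := @hv (s'.1, j', s'.2) (s.1, j, s.2) h
  exact congrArg (fun x => x.2.1) hs.symm

end Antipodal

section Triad

open scoped Matrix

/-- The planar exterior product `p ∧ q = p^⊥ · q`. -/
def wedge (p q : E2) : ℝ := perp p ⬝ᵥ q.ofLp

/-- The coefficient of `vᵢ^⊥ ⊗ vᵢ^⊥` in the decomposition of the symmetric matrix `R` along a triad
of pairwise non-parallel vectors. The other two vectors are `vᵢ₊₁` and `vᵢ₊₂`, indices mod 3. -/
def triadCoeff (v : Fin 3 → E2) (i : Fin 3) (R : Fin 2 → Fin 2 → ℝ) : ℝ :=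
  ((v (i + 1)).ofLp ⬝ᵥ Matrix.of R *ᵥ (v (i + 2)).ofLp) /
    (wedge (v i) (v (i + 1)) * wedge (v i) (v (i + 2)))

/-- A triad of pairwise non-parallel vectors along which the identity has positive coefficients,
that is, lies in the interior of the cone spanned by the matrices `vᵢ^⊥ ⊗ vᵢ^⊥`. -/
structure IsPositiveTriad (v : Fin 3 → E2) : Prop where
  wedge_ne_zero : ∀ i, wedge (v i) (v (i + 1)) ≠ 0
  triadCoeff_idMat_pos : ∀ i, 0 < triadCoeff v i idMat

lemma wedge_swap (p q : E2) : wedge p q = -wedge q p := by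
  simp only [wedge, perp, dotProduct, Fin.sum_univ_two, Matrix.cons_val_zero, Matrix.cons_val_one]
  ring

lemma wedge_mul_wedge_mul_wedge_mul_apply (p q r : E2) {R : Fin 2 → Fin 2 → ℝ}
    (hR : ∀ i j, R i j = R j i) (i j : Fin 2) :
    wedge p q * wedge q r * wedge r p * R i j =
      -(wedge q r * (q.ofLp ⬝ᵥ Matrix.of R *ᵥ r.ofLp) * perp p i * perp p j +
        wedge r p * (r.ofLp ⬝ᵥ Matrix.of R *ᵥ p.ofLp) * perp q i * perp q j +
        wedge p q * (p.ofLp ⬝ᵥ Matrix.of R *ᵥ q.ofLp) * perp r i * perp r j) := by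
  have hsymm : R 1 0 = R 0 1 := hR 1 0
  revert i j
  simp only [wedge, perp, dotProduct, Matrix.mulVec, Matrix.of_apply, Fin.sum_univ_two,
    Fin.forall_fin_two, Matrix.cons_val_zero, Matrix.cons_val_one, hsymm]
  refine ⟨⟨?_, ?_⟩, ?_, ?_⟩ <;> ring

theorem eq_sum_triadCoeff_mul_perp {v : Fin 3 → E2} (hv : ∀ i, wedge (v i) (v (i + 1)) ≠ 0)
    {R : Fin 2 → Fin 2 → ℝ} (hR : ∀ i j, R i j = R j i) (i j : Fin 2) :
    R i j = ∑ l, triadCoeff v l R * perp (v l) i * perp (v l) j := by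
  have h₀₁ : wedge (v 0) (v 1) ≠ 0 := hv 0
  have h₁₂ : wedge (v 1) (v 2) ≠ 0 := hv 1
  have h₂₀ : wedge (v 2) (v 0) ≠ 0 := hv 2
  simp only [triadCoeff, Fin.sum_univ_three, Fin.reduceAdd, zero_add]
  rw [wedge_swap (v 0) (v 2), wedge_swap (v 1) (v 0), wedge_swap (v 2) (v 1)]
  field_simp
  linear_combination wedge_mul_wedge_mul_wedge_mul_apply (v 0) (v 1) (v 2) hR i j

lemma contDiff_triadCoeff {n : WithTop ℕ∞} (v : Fin 3 → E2) (i : Fin 3) :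
    ContDiff ℝ n (triadCoeff v i) := by
  unfold triadCoeff
  simp only [dotProduct, Matrix.mulVec, Matrix.of_apply]
  fun_prop

lemma exists_forall_mem_symBall_pos {ι : Type*} [Finite ι] {f : ι → (Fin 2 → Fin 2 → ℝ) → ℝ}
    (hf : ∀ i, ContinuousAt (f i) idMat) (hpos : ∀ i, 0 < f i idMat) :
    ∃ ε > 0, ∀ R ∈ symBall ε, ∀ i, 0 < f i R := by
  have hnear : ∀ᶠ R in nhds idMat, ∀ i, 0 < f i R :=
    Filter.eventually_all.2 fun i => (hf i).eventually_const_lt (hpos i)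
  obtain ⟨ε, hε, h⟩ := Metric.eventually_nhds_iff.1 hnear
  exact ⟨ε, hε, fun R hR => h hR.2⟩

lemma perp_neg (k : E2) : perp (-k) = -perp k := by
  simp [perp]

lemma perp_signed_mul_perp_signed {ι : Type*} (v : ι → E2) (s : ℤˣ × ι) (i j : Fin 2) :
    perp (signed v s) i * perp (signed v s) j = perp (v s.2) i * perp (v s.2) j := by
  rcases Int.units_eq_one_or s.1 with h | h <;> simp [signed, h, perp_neg]

theorem eq_half_sum_antipodalSet {v : Fin 3 → E2} (hinj : Function.Injective (signed v))
    (hv : ∀ i, wedge (v i) (v (i + 1)) ≠ 0) {R : Fin 2 → Fin 2 → ℝ} (hR : ∀ i j, R i j = R j i)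
    {c : E2 → ℝ} (hc : ∀ s, c (signed v s) = triadCoeff v s.2 R) (i j : Fin 2) :
    R i j = (1 / 2) * ∑ k ∈ antipodalSet v, c k * perp k i * perp k j := by
  have hsum : ∑ k ∈ antipodalSet v, c k * perp k i * perp k j = 2 * R i j := calc
    _ = ∑ s : ℤˣ × Fin 3, triadCoeff v s.2 R * perp (v s.2) i * perp (v s.2) j := by
      simp only [sum_antipodalSet hinj, hc, mul_assoc, perp_signed_mul_perp_signed]
    _ = ∑ _u : ℤˣ, R i j := by
      simp only [Fintype.sum_prod_type, ← eq_sum_triadCoeff_mul_perp hv hR]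
    _ = 2 * R i j := by simp
  rw [hsum]
  ring

theorem exists_smooth_triad_decomposition {J : Type*} [Finite J] {v : J → Fin 3 → E2}
    (hv : ∀ j, IsPositiveTriad (v j)) (hinj : Function.Injective (signed (Function.uncurry v))) :
    ∃ ε > 0, ∃ γ : E2 → (Fin 2 → Fin 2 → ℝ) → ℝ, ∀ j,
      (∀ k ∈ antipodalSet (v j), γ k = γ (-k)) ∧
      (∀ k ∈ antipodalSet (v j),
        ContDiffOn ℝ (⊤ : ℕ∞) (γ k) (symBall ε) ∧ ∀ R ∈ symBall ε, 0 < γ k R) ∧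
      (∀ R ∈ symBall ε, ∀ i l : Fin 2,
        R i l = (1 / 2) * ∑ k ∈ antipodalSet (v j), (γ k R) ^ 2 * perp k i * perp k l) := by
  obtain ⟨ε, hε, hpos⟩ := exists_forall_mem_symBall_pos
    (f := fun x : J × Fin 3 => triadCoeff (v x.1) x.2)
    (fun x => (contDiff_triadCoeff (n := 0) _ _).continuous.continuousAt)
    (fun x => (hv x.1).triadCoeff_idMat_pos x.2)
  let γ := evenExtend (Function.uncurry v) fun x R => √(triadCoeff (v x.1) x.2 R)
  have hγ (j) (s : ℤˣ × Fin 3) : γ (signed (v j) s) = fun R => √(triadCoeff (v j) s.2 R) :=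
    evenExtend_signed hinj _ (s.1, j, s.2)
  refine ⟨ε, hε, γ, fun j => ⟨fun k hk => ?_, fun k hk => ?_, fun R hR => ?_⟩⟩
  · obtain ⟨s, rfl⟩ := mem_antipodalSet.1 hk
    rw [neg_signed, hγ, hγ]
  · obtain ⟨s, rfl⟩ := mem_antipodalSet.1 hk
    rw [hγ]
    exact ⟨(contDiff_triadCoeff _ _).contDiffOn.sqrt fun R hR => (hpos R hR (j, s.2)).ne',
      fun R hR => Real.sqrt_pos.2 (hpos R hR (j, s.2))⟩
  · refine eq_half_sum_antipodalSet (signed_injective_of_uncurry hinj j) (hv j).wedge_ne_zero hR.1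
      fun s => ?_
    rw [hγ, Real.sq_sqrt (hpos R hR (j, s.2)).le]

end Triad

section Lattice

open scoped Matrix

/-- The homomorphism `n ↦ n / N` from `ℤ²` to the plane, which vanishes identically if `N = 0`. -/
def latticePoint (N : ℕ) : (Fin 2 → ℤ) →+ E2 where
  toFun n := WithLp.toLp 2 fun i => (n i : ℝ) / N
  map_zero' := by ext; simp
  map_add' m n := by ext; simp [add_div]

lemma latticePoint_apply (N : ℕ) (n : Fin 2 → ℤ) (i : Fin 2) :
    latticePoint N n i = n i / N := rfl

lemma latticePoint_injective {N : ℕ} (hN : N ≠ 0) : Function.Injective (latticePoint N) := by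
  intro m n h
  funext i
  have hi : (m i : ℝ) / N = n i / N := congrArg (fun k : E2 => k i) h
  field_simp at hi
  exact_mod_cast hi

lemma norm_latticePoint_sq (N : ℕ) (n : Fin 2 → ℤ) :
    ‖latticePoint N n‖ ^ 2 = (n 0 ^ 2 + n 1 ^ 2 : ℤ) / N ^ 2 := by
  simp [EuclideanSpace.real_norm_sq_eq, latticePoint_apply, Fin.sum_univ_two, div_pow, add_div]

/-- The planar exterior product on `ℤ²`. -/
def intWedge (m n : Fin 2 → ℤ) : ℤ := m 0 * n 1 - m 1 * n 0

lemma wedge_latticePoint (N : ℕ) (m n : Fin 2 → ℤ) :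
    wedge (latticePoint N m) (latticePoint N n) = intWedge m n / N ^ 2 := by
  simp only [wedge, perp, dotProduct, Fin.sum_univ_two, latticePoint_apply, intWedge,
    Matrix.cons_val_zero, Matrix.cons_val_one]
  push_cast
  ring

lemma triadCoeff_latticePoint_idMat {N : ℕ} (hN : N ≠ 0) (n : Fin 3 → Fin 2 → ℤ) (i : Fin 3) :
    triadCoeff (latticePoint N ∘ n) i idMat = N ^ 2 * (n (i + 1) ⬝ᵥ n (i + 2) : ℤ) /
      (intWedge (n i) (n (i + 1)) * intWedge (n i) (n (i + 2)) : ℤ) := by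
  have hone : Matrix.of idMat = 1 := rfl
  have hdot : (latticePoint N (n (i + 1))).ofLp ⬝ᵥ (latticePoint N (n (i + 2))).ofLp =
      (n (i + 1) ⬝ᵥ n (i + 2) : ℤ) / N ^ 2 := by
    simp only [dotProduct, Fin.sum_univ_two, latticePoint_apply]
    push_cast
    ring
  simp only [triadCoeff, Function.comp_apply, wedge_latticePoint, hone, Matrix.one_mulVec, hdot]
  push_cast
  field_simp

lemma isPositiveTriad_latticePoint {N : ℕ} (hN : N ≠ 0) {n : Fin 3 → Fin 2 → ℤ}
    (hpos : ∀ i, 0 < n (i + 1) ⬝ᵥ n (i + 2) *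
      (intWedge (n i) (n (i + 1)) * intWedge (n i) (n (i + 2)))) :
    IsPositiveTriad (latticePoint N ∘ n) where
  wedge_ne_zero i := by
    have hwedge : intWedge (n i) (n (i + 1)) ≠ 0 :=
      left_ne_zero_of_mul (right_ne_zero_of_mul (hpos i).ne')
    simp only [Function.comp_apply, wedge_latticePoint]
    positivity
  triadCoeff_idMat_pos i := by
    rw [triadCoeff_latticePoint_idMat hN, mul_div_assoc]
    exact mul_pos (by positivity) (div_pos_iff.2 (by exact_mod_cast mul_pos_iff.1 (hpos i)))

end Lattice

section Waves

/-- Representatives modulo sign of the integer points on the circle of radius `5`, as two triads: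
the points with odd first coordinate, then those with odd second coordinate. -/
def radiusFivePoint : Fin 2 → Fin 3 → Fin 2 → ℤ :=
  ![![![5, 0], ![3, 4], ![3, -4]], ![![0, 5], ![4, 3], ![-4, 3]]]

lemma signed_radiusFivePoint_injective :
    Function.Injective (signed (Function.uncurry radiusFivePoint)) := by
  decide +kernel

lemma signed_radiusFivePoint_sq_add_sq (j : Fin 2) (s : ℤˣ × Fin 3) :
    signed (radiusFivePoint j) s 0 ^ 2 + signed (radiusFivePoint j) s 1 ^ 2 = 25 := by
  decide +kernel +revert

lemma le_sq_add_sq_of_signed_radiusFivePoint_add_ne_zero (j : Fin 2) (s t : ℤˣ × Fin 3)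
    (h : signed (radiusFivePoint j) s + signed (radiusFivePoint j) t ≠ 0) :
    25 ≤ 4 * ((signed (radiusFivePoint j) s + signed (radiusFivePoint j) t) 0 ^ 2 +
      (signed (radiusFivePoint j) s + signed (radiusFivePoint j) t) 1 ^ 2) := by
  decide +kernel +revert

/-- The two triads of wavevectors, generating `Ω₁` and `Ω₂` up to sign. -/
def waveTriad (j : Fin 2) : Fin 3 → E2 := latticePoint 5 ∘ radiusFivePoint j

lemma isPositiveTriad_waveTriad (j : Fin 2) : IsPositiveTriad (waveTriad j) :=
  isPositiveTriad_latticePoint (by norm_num) (by decide +kernel +revert)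

lemma signed_waveTriad_injective : Function.Injective (signed (Function.uncurry waveTriad)) := by
  have h : Function.uncurry waveTriad = latticePoint 5 ∘ Function.uncurry radiusFivePoint := rfl
  rw [h, signed_comp]
  exact (latticePoint_injective (by norm_num)).comp signed_radiusFivePoint_injective

lemma exists_latticePoint_eq_of_mem_waveTriad {j : Fin 2} {k : E2}
    (hk : k ∈ antipodalSet (waveTriad j)) :
    ∃ s, latticePoint 5 (signed (radiusFivePoint j) s) = k := by
  obtain ⟨s, rfl⟩ := mem_antipodalSet.1 hk
  exact ⟨s, (congrFun (signed_comp (latticePoint 5) (radiusFivePoint j)) s).symm⟩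

lemma norm_eq_one_of_mem_waveTriad {j : Fin 2} {k : E2} (hk : k ∈ antipodalSet (waveTriad j)) :
    ‖k‖ = 1 := by
  obtain ⟨s, rfl⟩ := exists_latticePoint_eq_of_mem_waveTriad hk
  rw [← sq_eq_sq₀ (norm_nonneg _) zero_le_one, norm_latticePoint_sq,
    signed_radiusFivePoint_sq_add_sq]
  norm_num

lemma exists_int_eq_five_mul_of_mem_waveTriad {j : Fin 2} {k : E2}
    (hk : k ∈ antipodalSet (waveTriad j)) (i : Fin 2) : ∃ m : ℤ, 5 * k i = m := by
  obtain ⟨s, rfl⟩ := exists_latticePoint_eq_of_mem_waveTriad hk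
  exact ⟨signed (radiusFivePoint j) s i, mul_div_cancel₀ _ (by norm_num)⟩

lemma half_le_norm_add_of_mem_waveTriad {j : Fin 2} {k k' : E2}
    (hk : k ∈ antipodalSet (waveTriad j))
    (hk' : k' ∈ antipodalSet (waveTriad j)) (hne : k + k' ≠ 0) : 1 / 2 ≤ ‖k + k'‖ := by
  obtain ⟨s, rfl⟩ := exists_latticePoint_eq_of_mem_waveTriad hk
  obtain ⟨t, rfl⟩ := exists_latticePoint_eq_of_mem_waveTriad hk'
  rw [← map_add] at hne ⊢
  have hint := le_sq_add_sq_of_signed_radiusFivePoint_add_ne_zero j s t fun h => hne (by simp [h])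
  rw [← sq_le_sq₀ (by norm_num) (norm_nonneg _), norm_latticePoint_sq, le_div_iff₀ (by norm_num)]
  have hreal := (Int.cast_le (R := ℝ)).2 hint
  push_cast at hreal ⊢
  linarith

end Waves

/-- Geometric Lemma: there are two disjoint finite families of unit vectors, with
`5 Ωⱼ ⊂ ℤ²`, together with smooth positive coefficient functions `γ_k` on a ball
of symmetric matrices around the identity, such that every `R` in this ball can be
written as `R = (1/2) ∑_{k ∈ Ω_j} γ_k(R)² (k^⊥ ⊗ k^⊥)`, with `γ_k = γ_{-k}`,
and such that `|k + k'| ≥ 1/2` whenever `k, k' ∈ Ω_j` and `k + k' ≠ 0`. -/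
theorem geometric_lemma :
    ∃ (ε : ℝ) (Ω₁ Ω₂ : Finset E2) (γ : E2 → (Fin 2 → Fin 2 → ℝ) → ℝ),
      0 < ε ∧
      Disjoint Ω₁ Ω₂ ∧
      (∀ Ω ∈ ({Ω₁, Ω₂} : Set (Finset E2)),
        -- Ω consists of unit vectors
        (∀ k ∈ Ω, ‖k‖ = 1) ∧
        -- (a) `5 Ω ⊂ ℤ²`
        (∀ k ∈ Ω, ∀ i : Fin 2, ∃ m : ℤ, 5 * k i = (m : ℝ)) ∧
        -- (b) symmetry of the family and of the coefficients
        (∀ k ∈ Ω, -k ∈ Ω ∧ γ k = γ (-k)) ∧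
        -- the coefficients are smooth and positive on the ball
        (∀ k ∈ Ω, ContDiffOn ℝ (⊤ : ℕ∞) (γ k) (symBall ε) ∧ ∀ R ∈ symBall ε, 0 < γ k R) ∧
        -- (c) the decomposition identity
        (∀ R ∈ symBall ε, ∀ i j : Fin 2,
          R i j = (1 / 2) * ∑ k ∈ Ω, (γ k R) ^ 2 * perp k i * perp k j) ∧
        -- (d) no small sums of non-antipodal wavevectors
        (∀ k ∈ Ω, ∀ k' ∈ Ω, k + k' ≠ 0 → (1 : ℝ) / 2 ≤ ‖k + k'‖)) := by
  obtain ⟨ε, hε, γ, hγ⟩ :=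
    exists_smooth_triad_decomposition isPositiveTriad_waveTriad signed_waveTriad_injective
  refine ⟨ε, antipodalSet (waveTriad 0), antipodalSet (waveTriad 1), γ, hε,
    disjoint_antipodalSet signed_waveTriad_injective zero_ne_one, ?_⟩
  intro Ω hΩ
  obtain ⟨j, rfl⟩ : ∃ j, Ω = antipodalSet (waveTriad j) := by
    rcases hΩ with rfl | rfl
    exacts [⟨0, rfl⟩, ⟨1, rfl⟩]
  obtain ⟨heven, hsmooth, hdecomp⟩ := hγ j
  exact ⟨fun _ => norm_eq_one_of_mem_waveTriad, fun _ => exists_int_eq_five_mul_of_mem_waveTriad,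
    fun k hk => ⟨neg_mem_antipodalSet hk, heven k hk⟩, hsmooth, hdecomp,
    fun _ hk _ hk' => half_le_norm_add_of_mem_waveTriad hk hk'⟩
end
end

section
/- Let t₀ < T be reals, let u : ℝ² × [t₀,T] → ℝ² be a smooth vector field, 2π-periodic in each space variable, and let f : ℝ² × [t₀,T] → ℝ be a smooth, 2π-periodic-in-space solution of the transport equation ∂_t f + u·∇f = g with f(·,t₀) = f₀, where g is smooth and 2π-periodic in space. Then for every t ∈ [t₀,T]: ‖Df(·,t)‖_{C⁰} ≤ ‖Df₀‖_{C⁰} e^{(t−t₀)‖Du‖_{C⁰}} + ∫_{t₀}^{t} e^{(t−τ)‖Du‖_{C⁰}} ‖Dg(·,τ)‖_{C⁰} dτ, where ‖Du‖_{C⁰} denotes the supremum over ℝ² × [t₀,T] of the norm of the spatial derivative of u. -/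
noncomputable section

open Real MeasureTheory
open scoped BigOperators

/-- `‖Du‖_{C⁰}`: the supremum over `x ∈ ℝ²` and `t ∈ [t₀,T]` of the operator norm
of the spatial derivative of `u`. -/
def supDu (u : E2 × ℝ → E2) (t₀ T : ℝ) : ℝ :=
  ⨆ (x : E2) (s : Set.Icc t₀ T), ‖fderiv ℝ (fun y => u (y, (s : ℝ))) x‖

/-! Along a characteristic `X' = u(X, s)`, differentiating the equation in space gives
`d/ds Df(X, s) = Dg(X, s) - Df(X, s) ∘ Du(X, s)`, hence
`‖d/ds Df(X, s)‖ ≤ ‖Du‖ ‖Df(X, s)‖ + ‖Dg(·, s)‖`. Grönwall's inequality with time-dependent forcing,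
applied along the characteristic that ends at `(x, t)`, bounds `‖Df(x, t)‖`. Spatial periodicity
makes every supremum one over a compact cell, so that it is finite and depends continuously on
time. -/

section Gronwall

/-- Duhamel's formula for the solution of `B' = M B + G` with `B a = C`. It is the comparison
function of Grönwall's inequality with time-dependent forcing `G`. -/
def duhamel (a C M : ℝ) (G : ℝ → ℝ) (s : ℝ) : ℝ :=
  C * exp ((s - a) * M) + ∫ τ in a..s, exp ((s - τ) * M) * G τ

variable {a b C M : ℝ} {G : ℝ → ℝ}

lemma duhamel_self : duhamel a C M G a = C := by
  simp [duhamel]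

lemma duhamel_eq_exp_mul (s : ℝ) :
    duhamel a C M G s =
      exp ((s - a) * M) * (C + ∫ τ in a..s, exp ((a - τ) * M) * G τ) := by
  have hint : ∫ τ in a..s, exp ((s - τ) * M) * G τ =
      exp ((s - a) * M) * ∫ τ in a..s, exp ((a - τ) * M) * G τ := by
    rw [← intervalIntegral.integral_const_mul]
    congr 1 with τ
    rw [← mul_assoc, ← exp_add, ← add_mul, sub_add_sub_cancel]
  rw [duhamel, hint]
  ring

lemma hasDerivAt_duhamel (hG : Continuous G) (s : ℝ) :
    HasDerivAt (duhamel a C M G) (M * duhamel a C M G s + G s) s := by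
  have hexp : HasDerivAt (fun r => exp ((r - a) * M)) (exp ((s - a) * M) * (1 * M)) s :=
    (((hasDerivAt_id s).sub_const a).mul_const M).exp
  have hint : HasDerivAt (fun r => C + ∫ τ in a..r, exp ((a - τ) * M) * G τ)
      (exp ((a - s) * M) * G s) s :=
    (Continuous.integral_hasStrictDerivAt (by fun_prop) a s).hasDerivAt.const_add C
  have hinv : exp ((s - a) * M) * exp ((a - s) * M) = 1 := by
    rw [← exp_add, ← add_mul, sub_add_sub_cancel, sub_self, zero_mul, exp_zero]
  rw [funext (f := duhamel a C M G) duhamel_eq_exp_mul]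
  refine (hexp.mul hint).congr_deriv ?_
  linear_combination G s * hinv

theorem norm_le_duhamel_of_norm_deriv_right_le {V : Type*} [NormedAddCommGroup V]
    [NormedSpace ℝ V] {v v' : ℝ → V} (hG : Continuous G) (hv : ContinuousOn v (Set.Icc a b))
    (hv' : ∀ s ∈ Set.Ico a b, HasDerivWithinAt v (v' s) (Set.Ici s) s) (hva : ‖v a‖ ≤ C)
    (bound : ∀ s ∈ Set.Ico a b, ‖v' s‖ ≤ M * ‖v s‖ + G s) :
    ∀ s ∈ Set.Icc a b, ‖v s‖ ≤ duhamel a C M G s := by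
  intro t ht
  refine le_of_forall_pos_le_add fun δ hδ => ?_
  -- Adding `δ e^{(s-t)(M+1)}`, which equals `δ` at `s = t`, makes the comparison strict.
  have hbarrier (s : ℝ) :
      HasDerivAt (fun r => duhamel a C M G r + δ * exp ((r - t) * (M + 1)))
        (M * duhamel a C M G s + G s + δ * (exp ((s - t) * (M + 1)) * (1 * (M + 1)))) s :=
    (hasDerivAt_duhamel hG s).add
      ((((hasDerivAt_id s).sub_const t).mul_const (M + 1)).exp.const_mul δ)
  have hstrict : ∀ s ∈ Set.Ico a b, ‖v s‖ = duhamel a C M G s + δ * exp ((s - t) * (M + 1)) →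
      ‖v' s‖ < M * duhamel a C M G s + G s + δ * (exp ((s - t) * (M + 1)) * (1 * (M + 1))) := by
    intro s hs heq
    have hpos : 0 < δ * exp ((s - t) * (M + 1)) := by positivity
    have hle := bound s hs
    rw [heq] at hle
    linarith
  have hinit : ‖v a‖ ≤ duhamel a C M G a + δ * exp ((a - t) * (M + 1)) := by
    rw [duhamel_self]
    exact hva.trans (le_add_of_nonneg_right (by positivity))
  simpa using image_norm_le_of_norm_deriv_right_lt_deriv_boundary hv hv' hinit hbarrier hstrict ht

end Gronwall

section Characteristics

variable {E : Type*} [NormedAddCommGroup E] [NormedSpace ℝ E]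

lemma exists_forall_mem_Icc_hasDerivWithinAt_of_lipschitzWith [CompleteSpace E] {v : ℝ → E → E}
    {a b : ℝ} {K L : NNReal} (hlip : ∀ s ∈ Set.Icc a b, LipschitzWith K (v s))
    (hcont : ∀ y, ContinuousOn (fun s => v s y) (Set.Icc a b))
    (hbdd : ∀ s ∈ Set.Icc a b, ∀ y, ‖v s y‖ ≤ L) (t : Set.Icc a b) (x : E) :
    ∃ X : ℝ → E, X t = x ∧
      ∀ s ∈ Set.Icc a b, HasDerivWithinAt X (v s (X s)) (Set.Icc a b) s := by
  have hpl : IsPicardLindelof v t x (L * (max (b - t) (t - a)).toNNReal) 0 L K :=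
    { lipschitzOnWith := fun s hs => (hlip s hs).lipschitzOnWith
      continuousOn := fun y _ => hcont y
      norm_le := fun s hs y _ => hbdd s hs y
      mul_max_le := by
        rw [NNReal.coe_mul, NNReal.coe_zero, sub_zero]
        gcongr
        exact le_coe_toNNReal _ }
  exact hpl.exists_eq_forall_mem_Icc_hasDerivWithinAt₀

end Characteristics

section MaterialDerivative

variable {E F : Type*} [NormedAddCommGroup E] [NormedSpace ℝ E] [NormedAddCommGroup F]
  [NormedSpace ℝ F] {u : E × ℝ → E} {f h : E × ℝ → F}

/-- The spatial derivative `Dh(x, t)` at the space-time point `p = (x, t)`. -/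
def spaceFDeriv (h : E × ℝ → F) (p : E × ℝ) : E →L[ℝ] F :=
  fderiv ℝ (fun y => h (y, p.2)) p.1

/-- The material derivative `∂ₜ h + u·∇h`, encoded as the derivative of `h` in the space-time
direction `(u, 1)`. -/
def materialDeriv (u : E × ℝ → E) (h : E × ℝ → F) (p : E × ℝ) : F :=
  fderiv ℝ h p (u p, 1)

lemma hasFDerivAt_space_slice {p : E × ℝ} (hh : DifferentiableAt ℝ h p) :
    HasFDerivAt (fun y => h (y, p.2)) ((fderiv ℝ h p).comp (.inl ℝ E ℝ)) p.1 :=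
  hh.hasFDerivAt.comp p.1 (hasFDerivAt_prodMk_left p.1 p.2)

lemma spaceFDeriv_eq_comp_inl (hh : Differentiable ℝ h) :
    spaceFDeriv h = fun p => (fderiv ℝ h p).comp (.inl ℝ E ℝ) :=
  funext fun p => (hasFDerivAt_space_slice (hh p)).fderiv

lemma continuous_spaceFDeriv (hh : ContDiff ℝ 1 h) : Continuous (spaceFDeriv h) := by
  rw [spaceFDeriv_eq_comp_inl (hh.differentiable one_ne_zero)]
  have := hh.continuous_fderiv one_ne_zero
  fun_prop

lemma differentiable_fderiv (hf : ContDiff ℝ 2 f) : Differentiable ℝ (fderiv ℝ f) :=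
  (hf.fderiv_right (m := 1) one_add_one_eq_two.le).differentiable one_ne_zero

lemma differentiable_spaceFDeriv (hf : ContDiff ℝ 2 f) : Differentiable ℝ (spaceFDeriv f) := by
  rw [spaceFDeriv_eq_comp_inl (hf.differentiable two_ne_zero)]
  have := differentiable_fderiv hf
  fun_prop

lemma materialDeriv_eq_deriv_add {x : E} {t : ℝ} (hh : DifferentiableAt ℝ h (x, t)) :
    materialDeriv u h (x, t) =
      deriv (fun s => h (x, s)) t + fderiv ℝ (fun y => h (y, t)) x (u (x, t)) := by
  have htime : HasDerivAt (fun s => h (x, s)) (fderiv ℝ h (x, t) (0, 1)) t :=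
    hh.hasFDerivAt.comp_hasDerivAt t ((hasDerivAt_const t x).prodMk (hasDerivAt_id t))
  rw [htime.deriv, (hasFDerivAt_space_slice hh).fderiv, ContinuousLinearMap.comp_apply,
    ContinuousLinearMap.inl_apply, ← map_add]
  simp [materialDeriv]

lemma fderiv_spaceFDeriv_apply (hf : ContDiff ℝ 2 f) (p w : E × ℝ) (e : E) :
    fderiv ℝ (spaceFDeriv f) p w e = fderiv ℝ (fderiv ℝ f) p w (e, 0) := by
  have hderiv := ((differentiable_fderiv hf p).hasFDerivAt.clm_comp
    (hasFDerivAt_const (ContinuousLinearMap.inl ℝ E ℝ) p)).fderiv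
  rw [spaceFDeriv_eq_comp_inl (hf.differentiable two_ne_zero), hderiv]
  simp

lemma spaceFDeriv_materialDeriv (hf : ContDiff ℝ 2 f) {p : E × ℝ} (hu : DifferentiableAt ℝ u p) :
    spaceFDeriv (materialDeriv u f) p =
      materialDeriv u (spaceFDeriv f) p + (spaceFDeriv f p).comp (spaceFDeriv u p) := by
  ext e
  have hsymm : fderiv ℝ (fderiv ℝ f) p (u p, 1) (e, 0) = fderiv ℝ (fderiv ℝ f) p (e, 0) (u p, 1) :=
    hf.contDiffAt.isSymmSndFDerivAt (by simp) _ _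
  have hdir := (hasFDerivAt_space_slice hu).prodMk (hasFDerivAt_const (1 : ℝ) p.1)
  have hprod := ((hasFDerivAt_space_slice (differentiable_fderiv hf p)).clm_apply hdir).fderiv
  rw [spaceFDeriv, add_apply, materialDeriv, fderiv_spaceFDeriv_apply hf, hsymm,
    spaceFDeriv_eq_comp_inl (hf.differentiable two_ne_zero), spaceFDeriv,
    (hasFDerivAt_space_slice hu).fderiv]
  unfold materialDeriv
  rw [hprod]
  simp [add_comm]

lemma hasDerivWithinAt_comp_characteristic {X : ℝ → E} {S : Set ℝ} {s : ℝ}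
    (hh : DifferentiableAt ℝ h (X s, s)) (hX : HasDerivWithinAt X (u (X s, s)) S s) :
    HasDerivWithinAt (fun r => h (X r, r)) (materialDeriv u h (X s, s)) S s :=
  hh.hasFDerivAt.comp_hasDerivWithinAt (f := fun r => (X r, r)) s
    (hX.prodMk (hasDerivWithinAt_id s S))

lemma norm_materialDeriv_spaceFDeriv_le (hf : ContDiff ℝ 2 f) {p : E × ℝ}
    (hu : DifferentiableAt ℝ u p) :
    ‖materialDeriv u (spaceFDeriv f) p‖ ≤
      ‖spaceFDeriv u p‖ * ‖spaceFDeriv f p‖ + ‖spaceFDeriv (materialDeriv u f) p‖ := by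
  rw [eq_sub_of_add_eq (spaceFDeriv_materialDeriv hf hu).symm]
  calc ‖spaceFDeriv (materialDeriv u f) p - (spaceFDeriv f p).comp (spaceFDeriv u p)‖
      ≤ ‖spaceFDeriv (materialDeriv u f) p‖ + ‖(spaceFDeriv f p).comp (spaceFDeriv u p)‖ :=
        norm_sub_le _ _
    _ ≤ ‖spaceFDeriv (materialDeriv u f) p‖ + ‖spaceFDeriv f p‖ * ‖spaceFDeriv u p‖ := by
        gcongr
        exact ContinuousLinearMap.opNorm_comp_le _ _
    _ = _ := by ring

lemma exists_characteristic [CompleteSpace E] {t₀ t L M : ℝ} (ht : t₀ ≤ t)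
    (hu : Differentiable ℝ u) (hL : ∀ x, ∀ s ∈ Set.Icc t₀ t, ‖u (x, s)‖ ≤ L)
    (hM : ∀ x, ∀ s ∈ Set.Icc t₀ t, ‖spaceFDeriv u (x, s)‖ ≤ M) (x : E) :
    ∃ X : ℝ → E, X t = x ∧
      ∀ s ∈ Set.Icc t₀ t, HasDerivWithinAt X (u (X s, s)) (Set.Icc t₀ t) s := by
  have hlip : ∀ s ∈ Set.Icc t₀ t, LipschitzWith M.toNNReal fun y => u (y, s) := fun s hs =>
    lipschitzWith_of_nnnorm_fderiv_le (𝕜 := ℝ) (hu.comp (by fun_prop))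
      fun y => NNReal.le_toNNReal_of_coe_le (hM y s hs)
  have hcont (y : E) : ContinuousOn (fun s => u (y, s)) (Set.Icc t₀ t) :=
    (hu.continuous.comp (by fun_prop)).continuousOn
  exact exists_forall_mem_Icc_hasDerivWithinAt_of_lipschitzWith hlip hcont
    (fun s hs y => (hL y s hs).trans (le_coe_toNNReal L)) ⟨t, ht, le_rfl⟩ x

theorem norm_fderiv_le_of_transport [CompleteSpace E] {g : E × ℝ → F} {G : ℝ → ℝ}
    {t₀ t L M C : ℝ} (ht : t₀ ≤ t) (hu : Differentiable ℝ u)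
    (hL : ∀ x, ∀ s ∈ Set.Icc t₀ t, ‖u (x, s)‖ ≤ L)
    (hM : ∀ x, ∀ s ∈ Set.Icc t₀ t, ‖fderiv ℝ (fun y => u (y, s)) x‖ ≤ M)
    (hf : ContDiff ℝ 2 f) (hC : ∀ x, ‖fderiv ℝ (fun y => f (y, t₀)) x‖ ≤ C) (hG : Continuous G)
    (hgG : ∀ x, ∀ s ∈ Set.Icc t₀ t, ‖fderiv ℝ (fun y => g (y, s)) x‖ ≤ G s)
    (heq : ∀ x, ∀ s ∈ Set.Icc t₀ t,
      deriv (fun r => f (x, r)) s + fderiv ℝ (fun y => f (y, s)) x (u (x, s)) = g (x, s)) (x : E) :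
    ‖fderiv ℝ (fun y => f (y, t)) x‖ ≤
      C * exp ((t - t₀) * M) + ∫ τ in t₀..t, exp ((t - τ) * M) * G τ := by
  obtain ⟨X, rfl, hX⟩ := exists_characteristic ht hu hL hM x
  have hderiv (s : ℝ) (hs : s ∈ Set.Icc t₀ t) :
      HasDerivWithinAt (fun r => spaceFDeriv f (X r, r))
        (materialDeriv u (spaceFDeriv f) (X s, s)) (Set.Icc t₀ t) s :=
    hasDerivWithinAt_comp_characteristic (differentiable_spaceFDeriv hf _) (hX s hs)
  have hsource (s : ℝ) (hs : s ∈ Set.Icc t₀ t) :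
      (fun y => materialDeriv u f (y, s)) = fun y => g (y, s) := funext fun y =>
    (materialDeriv_eq_deriv_add (hf.differentiable two_ne_zero _)).trans (heq y s hs)
  have hbound (s : ℝ) (hs : s ∈ Set.Icc t₀ t) :
      ‖materialDeriv u (spaceFDeriv f) (X s, s)‖ ≤ M * ‖spaceFDeriv f (X s, s)‖ + G s := by
    refine (norm_materialDeriv_spaceFDeriv_le hf (hu _)).trans ?_
    gcongr
    · exact hM (X s) s hs
    · rw [spaceFDeriv, hsource s hs]
      exact hgG (X s) s hs
  exact norm_le_duhamel_of_norm_deriv_right_le hG (fun s hs => (hderiv s hs).continuousWithinAt)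
    (fun s hs => (hderiv s (Set.Ico_subset_Icc_self hs)).mono_of_mem_nhdsWithin
      (Filter.mem_of_superset (Icc_mem_nhdsGE hs.2) (Set.Icc_subset_Icc_left hs.1)))
    (hC (X t₀)) (fun s hs => hbound s (Set.Ico_subset_Icc_self hs)) t ⟨ht, le_rfl⟩

end MaterialDerivative

lemma periodic_of_mem_span_int {A α : Type*} [AddCommGroup A] {φ : A → α} {S : Set A}
    (hφ : ∀ c ∈ S, Function.Periodic φ c) {c : A} (hc : c ∈ Submodule.span ℤ S) :
    Function.Periodic φ c := by
  induction hc using Submodule.span_induction with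
  | mem c hc => exact hφ c hc
  | zero => exact fun x => by rw [add_zero]
  | add c d _ _ hc hd => exact hc.add_period hd
  | smul n c _ hc => exact hc.zsmul n

section Periodicity

open Module

variable {ι E α : Type*} [NormedAddCommGroup E] [NormedSpace ℝ E] {b : Basis ι ℝ E}

/-- `h(x, t)` is periodic in the space variable `x` with respect to the lattice spanned by `b`. -/
def SpacePeriodic (b : Basis ι ℝ E) (h : E × ℝ → α) : Prop :=
  ∀ t i, Function.Periodic (fun x => h (x, t)) (b i)

lemma isCompact_closure_fundamentalDomain [Finite ι] (b : Basis ι ℝ E) :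
    IsCompact (closure (ZSpan.fundamentalDomain b)) := by
  have := Module.Finite.of_basis b
  have := FiniteDimensional.proper_real E
  exact (ZSpan.fundamentalDomain_isBounded b).isCompact_closure

namespace SpacePeriodic

lemma norm {F : Type*} [Norm F] {h : E × ℝ → F} (hh : SpacePeriodic b h) :
    SpacePeriodic b fun p => ‖h p‖ :=
  fun t i => (hh t i).comp Norm.norm

lemma spaceFDeriv {F : Type*} [NormedAddCommGroup F] [NormedSpace ℝ F] {h : E × ℝ → F}
    (hh : SpacePeriodic b h) : SpacePeriodic b (spaceFDeriv h) := by
  intro t i x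
  simp only [_root_.spaceFDeriv]
  rw [← fderiv_comp_add_right]
  exact congrArg (fderiv ℝ · x) (funext (hh t i))

variable [Finite ι]

lemma exists_mem_closure_fundamentalDomain {h : E × ℝ → α} (hh : SpacePeriodic b h) (x : E) :
    ∃ y ∈ closure (ZSpan.fundamentalDomain b), ∀ t, h (y, t) = h (x, t) := by
  have := Fintype.ofFinite ι
  exact ⟨ZSpan.fract b x, subset_closure (ZSpan.fract_mem_fundamentalDomain b x), fun t =>
    (periodic_of_mem_span_int (Set.forall_mem_range.2 (hh t)) (ZSpan.floor b x).2).sub_eq x⟩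

lemma image_closure_fundamentalDomain {h : E × ℝ → α} (hh : SpacePeriodic b h) (t : ℝ) :
    (fun x => h (x, t)) '' closure (ZSpan.fundamentalDomain b) = Set.range fun x => h (x, t) := by
  refine (Set.image_subset_range _ _).antisymm (Set.range_subset_iff.2 fun x => ?_)
  obtain ⟨y, hy, hyx⟩ := hh.exists_mem_closure_fundamentalDomain x
  exact ⟨y, hy, hyx t⟩

variable {q : E × ℝ → ℝ}

lemma exists_forall_le (hper : SpacePeriodic b q) (hq : Continuous q) {K : Set ℝ}
    (hK : IsCompact K) : ∃ C, ∀ x, ∀ t ∈ K, q (x, t) ≤ C := by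
  obtain ⟨C, hC⟩ := (((isCompact_closure_fundamentalDomain b).prod hK).image hq).bddAbove
  refine ⟨C, fun x t ht => ?_⟩
  obtain ⟨y, hy, hyx⟩ := hper.exists_mem_closure_fundamentalDomain x
  exact hC ⟨(y, t), ⟨hy, ht⟩, hyx t⟩

lemma le_iSup (hper : SpacePeriodic b q) (hq : Continuous q) (x : E) (t : ℝ) :
    q (x, t) ≤ ⨆ y, q (y, t) := by
  obtain ⟨C, hC⟩ := hper.exists_forall_le hq (isCompact_singleton (x := t))
  exact le_ciSup (f := fun y => q (y, t)) ⟨C, Set.forall_mem_range.2 fun y => hC y t rfl⟩ x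

lemma continuous_iSup (hper : SpacePeriodic b q) (hq : Continuous q) :
    Continuous fun t => ⨆ x, q (x, t) := by
  simp only [iSup, ← hper.image_closure_fundamentalDomain]
  exact (isCompact_closure_fundamentalDomain b).continuous_sSup
    (f := fun t x => q (x, t)) (hq.comp continuous_swap)

lemma norm_fderiv_le_iSup {F : Type*} [NormedAddCommGroup F] [NormedSpace ℝ F] {h : E × ℝ → F}
    (hhper : SpacePeriodic b h) (hh : ContDiff ℝ 1 h) {t₀ T s : ℝ} (x : E)
    (hs : s ∈ Set.Icc t₀ T) :
    ‖fderiv ℝ (fun y => h (y, s)) x‖ ≤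
      ⨆ (y : E) (r : Set.Icc t₀ T), ‖fderiv ℝ (fun z => h (z, (r : ℝ))) y‖ := by
  obtain ⟨C, hC⟩ := hhper.spaceFDeriv.norm.exists_forall_le (continuous_spaceFDeriv hh).norm
    (isCompact_Icc (a := t₀) (b := T))
  have : Nonempty (Set.Icc t₀ T) := ⟨⟨s, hs⟩⟩
  calc ‖fderiv ℝ (fun y => h (y, s)) x‖
      ≤ ⨆ r : Set.Icc t₀ T, ‖fderiv ℝ (fun y => h (y, (r : ℝ))) x‖ :=
        le_ciSup (f := fun r : Set.Icc t₀ T => ‖fderiv ℝ (fun y => h (y, (r : ℝ))) x‖)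
          ⟨C, Set.forall_mem_range.2 fun r => hC x r r.2⟩ ⟨s, hs⟩
    _ ≤ _ :=
        le_ciSup (f := fun y => ⨆ r : Set.Icc t₀ T, ‖fderiv ℝ (fun z => h (z, (r : ℝ))) y‖)
          ⟨C, Set.forall_mem_range.2 fun y => ciSup_le fun r => hC y r r.2⟩ x

end SpacePeriodic

theorem transport_first_derivative_estimate_general [Finite ι] {F : Type*} [NormedAddCommGroup F]
    [NormedSpace ℝ F] {t₀ T : ℝ} {u : E × ℝ → E} {f g : E × ℝ → F} {f₀ : E → F}
    (hu : ContDiff ℝ 1 u) (huper : SpacePeriodic b u) (hf : ContDiff ℝ 2 f)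
    (hf₀per : ∀ i, Function.Periodic f₀ (b i)) (hg : ContDiff ℝ 1 g) (hgper : SpacePeriodic b g)
    (hf₀ : ∀ x, f (x, t₀) = f₀ x)
    (heq : ∀ x, ∀ t ∈ Set.Icc t₀ T,
      deriv (fun s => f (x, s)) t + fderiv ℝ (fun y => f (y, t)) x (u (x, t)) = g (x, t)) :
    ∀ t ∈ Set.Icc t₀ T,
      (⨆ x, ‖fderiv ℝ (fun y => f (y, t)) x‖) ≤
        (⨆ x, ‖fderiv ℝ f₀ x‖) *
            exp ((t - t₀) * ⨆ (x) (s : Set.Icc t₀ T), ‖fderiv ℝ (fun y => u (y, (s : ℝ))) x‖) +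
          ∫ τ in t₀..t,
            exp ((t - τ) * ⨆ (x) (s : Set.Icc t₀ T), ‖fderiv ℝ (fun y => u (y, (s : ℝ))) x‖) *
              ⨆ x, ‖fderiv ℝ (fun y => g (y, τ)) x‖ := by
  intro t ht
  obtain rfl : f₀ = fun y => f (y, t₀) := funext fun y => (hf₀ y).symm
  have := Module.Finite.of_basis b
  have := FiniteDimensional.complete ℝ E
  have hsub : Set.Icc t₀ t ⊆ Set.Icc t₀ T := Set.Icc_subset_Icc_right ht.2
  have hf₀smooth : ContDiff ℝ 1 fun p : E × ℝ => f (p.1, t₀) :=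
    (hf.of_le one_le_two).comp (by fun_prop)
  have hf₀per' : SpacePeriodic b fun p : E × ℝ => f (p.1, t₀) := fun _ => hf₀per
  have hDf₀ (x : E) := hf₀per'.spaceFDeriv.norm.le_iSup (continuous_spaceFDeriv hf₀smooth).norm x t₀
  have hDg := (continuous_spaceFDeriv hg).norm
  have hDgper := hgper.spaceFDeriv.norm
  obtain ⟨L, hL⟩ := huper.norm.exists_forall_le hu.continuous.norm
    (isCompact_Icc (a := t₀) (b := t))
  exact ciSup_le <| norm_fderiv_le_of_transport ht.1 (hu.differentiable one_ne_zero) hL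
    (fun x s hs => huper.norm_fderiv_le_iSup hu x (hsub hs)) hf hDf₀
    (hDgper.continuous_iSup hDg)
    (fun x s _ => hDgper.le_iSup hDg x s) (fun x s hs => heq x s (hsub hs))

/-- The basis `2π eᵢ` of the lattice `(2πℤ)ⁿ`. -/
def torusBasis (ι : Type*) [Fintype ι] : Basis ι ℝ (EuclideanSpace ℝ ι) :=
  (EuclideanSpace.basisFun ι ℝ).toBasis.isUnitSMul (w := fun _ => 2 * π)
    fun _ => two_pi_pos.ne'.isUnit

lemma spacePeriodic_torusBasis [Fintype ι] [DecidableEq ι] {h : EuclideanSpace ℝ ι × ℝ → α}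
    (hh : ∀ x t i, h (x + (2 * π) • EuclideanSpace.single i 1, t) = h (x, t)) :
    SpacePeriodic (torusBasis ι) h := by
  intro t i x
  simpa [torusBasis, Basis.isUnitSMul_apply] using hh x t i

end Periodicity

/-- First-derivative transport estimate for `∂ₜ f + u·∇f = g`:
`‖Df(·,t)‖_{C⁰} ≤ ‖Df₀‖_{C⁰} e^{(t−t₀)‖Du‖_{C⁰}} + ∫_{t₀}^t e^{(t−τ)‖Du‖_{C⁰}} ‖Dg(·,τ)‖_{C⁰} dτ`. -/
theorem transport_first_derivative_estimate (t₀ T : ℝ) (ht : t₀ < T)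
    (u : E2 × ℝ → E2) (f g : E2 × ℝ → ℝ) (f₀ : E2 → ℝ)
    (hu : ContDiff ℝ (⊤ : ℕ∞) u)
    (huper : ∀ (x : E2) (t : ℝ) (i : Fin 2),
      u (x + (2 * π) • EuclideanSpace.single i 1, t) = u (x, t))
    (hf : ContDiff ℝ (⊤ : ℕ∞) f)
    (hfper : ∀ (x : E2) (t : ℝ) (i : Fin 2),
      f (x + (2 * π) • EuclideanSpace.single i 1, t) = f (x, t))
    (hg : ContDiff ℝ (⊤ : ℕ∞) g)
    (hgper : ∀ (x : E2) (t : ℝ) (i : Fin 2),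
      g (x + (2 * π) • EuclideanSpace.single i 1, t) = g (x, t))
    (hf0 : ∀ x, f (x, t₀) = f₀ x)
    (heq : ∀ (x : E2), ∀ t ∈ Set.Icc t₀ T,
      deriv (fun s => f (x, s)) t + fderiv ℝ (fun y => f (y, t)) x (u (x, t)) = g (x, t)) :
    ∀ t ∈ Set.Icc t₀ T,
      (⨆ x : E2, ‖fderiv ℝ (fun y => f (y, t)) x‖)
        ≤ (⨆ x : E2, ‖fderiv ℝ f₀ x‖) * Real.exp ((t - t₀) * supDu u t₀ T)
          + ∫ τ in t₀..t,
              Real.exp ((t - τ) * supDu u t₀ T) *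
                (⨆ x : E2, ‖fderiv ℝ (fun y => g (y, τ)) x‖) := by
  have hf₀per (i : Fin 2) : Function.Periodic f₀ (torusBasis (Fin 2) i) := by
    simpa only [hf0] using spacePeriodic_torusBasis hfper t₀ i
  exact transport_first_derivative_estimate_general (hu.of_le (by norm_cast))
    (spacePeriodic_torusBasis huper) (hf.of_le (by norm_cast)) hf₀per
    (hg.of_le (by norm_cast)) (spacePeriodic_torusBasis hgper) hf0 heq
end
end

section
/- There exists a universal constant C with the following property. Fix s ∈ ℝ, λ ≥ 1 and C₀ > 0. Let K : ℝ² → ℝ be a continuously differentiable kernel satisfying ∫_{ℝ²} |x|^a |∇^b K(x)| dx ≤ C₀ λ^{b−a+s} for all integers a, b ∈ {0,1}, and define T_K h(x) = ∫_{ℝ²} K(y) h(x−y) dy. Then for every smooth, 2π-periodic vector field u : ℝ² → ℝ² with div u = 0 and every smooth 2π-periodic function f : ℝ² → ℝ: sup_{x∈ℝ²} | T_K(u·∇f)(x) − u(x)·∇(T_K f)(x) | ≤ C C₀ λ^s ‖∇u‖_{C⁰} ‖f‖_{C⁰}. -/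
noncomputable section

open Real MeasureTheory
open scoped BigOperators

/-!
Set `w(y) = u(x - y) - u(x)` and `g(y) = f(x - y)`. Differentiating `T_K f` under the integral sign,
the commutator at `x` is `∫ K(y) ∇f(x - y)·w(y) dy = -∫ K w·∇g`. As `w` is divergence-free, an
integration by parts moves the derivative to the kernel and leaves `∫ (w·∇K) g`. The mean value
inequality `|w(y)| ≤ ‖∇u‖ |y|` then bounds this by `‖∇u‖ ‖f‖ ∫ |y| |∇K(y)| dy`.
-/

open scoped Convolution
open ContinuousLinearMap (lsmul)

section Periodic

variable {E F ι : Type*}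

theorem periodic_of_mem_zspan [AddCommGroup E] {h : E → F} {v : ι → E}
    (hper : ∀ i, Function.Periodic h (v i)) {w : E}
    (hw : w ∈ Submodule.span ℤ (Set.range v)) : Function.Periodic h w := by
  induction hw using Submodule.span_induction with
  | mem _ hmem => obtain ⟨i, rfl⟩ := hmem; exact hper i
  | zero => exact fun x => by rw [add_zero]
  | add _ _ _ _ hw₁ hw₂ => exact hw₁.add_period hw₂
  | smul n _ _ hw => exact hw.zsmul n

variable [NormedAddCommGroup E] [NormedSpace ℝ E]

theorem isCompact_range_of_continuous_of_periodic [FiniteDimensional ℝ E] [TopologicalSpace F]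
    [Finite ι] (b : Module.Basis ι ℝ E) {h : E → F} (hcont : Continuous h)
    (hper : ∀ i, Function.Periodic h (b i)) : IsCompact (Set.range h) := by
  have := Fintype.ofFinite ι
  have := FiniteDimensional.proper ℝ E
  have hfract (x : E) : h (ZSpan.fract b x) = h x :=
    (periodic_of_mem_zspan hper (ZSpan.floor b x).2).sub_eq x
  have hrange : Set.range h = h '' Metric.closedBall 0 (∑ i, ‖b i‖) := by
    refine (Set.image_subset_range h _).antisymm' ?_
    rintro _ ⟨x, rfl⟩
    exact ⟨ZSpan.fract b x, mem_closedBall_zero_iff.2 (ZSpan.norm_fract_le b x), hfract x⟩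
  rw [hrange]
  exact (isCompact_closedBall _ _).image hcont

theorem bddAbove_range_norm_of_continuous_of_periodic [FiniteDimensional ℝ E]
    [SeminormedAddCommGroup F] [Finite ι] (b : Module.Basis ι ℝ E) {h : E → F}
    (hcont : Continuous h) (hper : ∀ i, Function.Periodic h (b i)) :
    BddAbove (Set.range fun x => ‖h x‖) :=
  (isCompact_range_of_continuous_of_periodic b hcont.norm fun i => (hper i).comp norm).bddAbove

theorem periodic_fderiv [NormedAddCommGroup F] [NormedSpace ℝ F] {h : E → F} {c : E}
    (hper : Function.Periodic h c) : Function.Periodic (fderiv ℝ h) c := fun x => by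
  rw [← fderiv_comp_add_right, funext hper]

/-- The basis `2π eᵢ` of Euclidean space: a function with these periods is `2π`-periodic in every
coordinate. -/
def twoPiBasis (ι : Type*) [Fintype ι] : Module.Basis ι ℝ (EuclideanSpace ℝ ι) :=
  (EuclideanSpace.basisFun ι ℝ).toBasis.isUnitSMul
    (w := fun _ => 2 * π) fun _ => two_pi_pos.ne'.isUnit

theorem twoPiBasis_apply (ι : Type*) [Fintype ι] [DecidableEq ι] (i : ι) :
    twoPiBasis ι i = (2 * π) • EuclideanSpace.single i 1 := by
  simp [twoPiBasis, Module.Basis.isUnitSMul_apply]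

end Periodic

section Reflection

variable {E F : Type*} [NormedAddCommGroup E] [NormedSpace ℝ E] [NormedAddCommGroup F]
  [NormedSpace ℝ F]

theorem fderiv_comp_const_sub_eq_neg {h : E → F} (hh : Differentiable ℝ h) (x y : E) :
    fderiv ℝ (fun z => h (x - z)) y = -fderiv ℝ h (x - y) := by
  have hsub : HasFDerivAt (fun z => x - z) (-ContinuousLinearMap.id ℝ E) y :=
    (hasFDerivAt_id y).const_sub x
  simpa [Function.comp_def] using ((hh (x - y)).hasFDerivAt.comp y hsub).fderiv

theorem norm_sub_le_mul_of_norm_fderiv_le {u : E → F} {S : ℝ} (hu : Differentiable ℝ u)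
    (hu_le : ∀ z, ‖fderiv ℝ u z‖ ≤ S) (x y : E) : ‖u (x - y) - u x‖ ≤ S * ‖y‖ := by
  simpa using convex_univ.norm_image_sub_le_of_norm_fderiv_le (fun z _ => hu z)
    (fun z _ => hu_le z) (Set.mem_univ x) (Set.mem_univ (x - y))

end Reflection

section Divergence

variable {E : Type*} [NormedAddCommGroup E] [NormedSpace ℝ E]

/-- The divergence of a vector field on a real normed space, as the coordinate-free trace of its
derivative. It takes the value `0` where the field is not differentiable, and everywhere if the
space is infinite-dimensional. -/
def divergence (u : E → E) (x : E) : ℝ :=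
  LinearMap.trace ℝ E (fderiv ℝ u x)

theorem divergence_eq_sum_single {ι : Type*} [Fintype ι] [DecidableEq ι]
    {u : EuclideanSpace ℝ ι → EuclideanSpace ℝ ι} {x : EuclideanSpace ℝ ι}
    (hu : DifferentiableAt ℝ u x) :
    divergence u x = ∑ j, fderiv ℝ (fun y => u y j) x (EuclideanSpace.single j 1) := by
  have hcoord (j : ι) : fderiv ℝ (fun y => u y j) x = (EuclideanSpace.proj j).comp (fderiv ℝ u x) :=
    ((EuclideanSpace.proj (𝕜 := ℝ) j).hasFDerivAt.comp x hu.hasFDerivAt).fderiv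
  rw [divergence, LinearMap.trace_eq_sum_inner _ (EuclideanSpace.basisFun ι ℝ)]
  simp [hcoord, EuclideanSpace.inner_single_left]

theorem divergence_comp_const_sub_sub_const {u : E → E} (hu : Differentiable ℝ u) (x y c : E) :
    divergence (fun z => u (x - z) - c) y = -divergence u (x - y) := by
  rw [divergence, divergence, fderiv_sub_const, fderiv_comp_const_sub_eq_neg hu]
  exact map_neg _ _

theorem divergence_smul [FiniteDimensional ℝ E] {φ : E → ℝ} {w : E → E} {x : E}
    (hφ : DifferentiableAt ℝ φ x) (hw : DifferentiableAt ℝ w x) :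
    divergence (fun y => φ y • w y) x = φ x * divergence w x + fderiv ℝ φ x (w x) := by
  rw [divergence, divergence, fderiv_fun_smul hφ hw, ContinuousLinearMap.toLinearMap_add, map_add,
    ContinuousLinearMap.toLinearMap_smul, map_smul, smul_eq_mul]
  congr 1
  exact LinearMap.trace_smulRight _ _

end Divergence

section IntegrationByParts

variable {E F : Type*} [NormedAddCommGroup E] [NormedSpace ℝ E] [MeasurableSpace E]
  [BorelSpace E] [NormedAddCommGroup F] [NormedSpace ℝ F] {μ : Measure E}

theorem integrable_mul_clm_apply {K : E → ℝ} {L : E → E →L[ℝ] ℝ} {w : E → E} {M : ℝ}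
    (hK : Continuous K) (hL : Continuous L) (hw : Continuous w) (hL_le : ∀ x, ‖L x‖ ≤ M)
    (hKw : Integrable (fun x => ‖K x‖ * ‖w x‖) μ) :
    Integrable (fun x => K x * L x (w x)) μ := by
  refine (hKw.mul_const M).mono' (hK.mul (hL.clm_apply hw)).aestronglyMeasurable
    (.of_forall fun x => ?_)
  calc ‖K x * L x (w x)‖ ≤ ‖K x‖ * (M * ‖w x‖) := by
        rw [norm_mul]
        gcongr
        exact (L x).le_of_opNorm_le (hL_le x) _
    _ = ‖K x‖ * ‖w x‖ * M := by ring

theorem integrable_norm_fderiv_mul_mul_norm {K g : E → ℝ} {w : E → E} {N M : ℝ}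
    (hK : ContDiff ℝ 1 K) (hg : ContDiff ℝ 1 g) (hw : Continuous w) (hg_le : ∀ x, ‖g x‖ ≤ N)
    (hg'_le : ∀ x, ‖fderiv ℝ g x‖ ≤ M) (hKw : Integrable (fun x => ‖K x‖ * ‖w x‖) μ)
    (hK'w : Integrable (fun x => ‖fderiv ℝ K x‖ * ‖w x‖) μ) :
    Integrable (fun x => ‖fderiv ℝ (fun y => K y * g y) x‖ * ‖w x‖) μ := by
  have hKg' : Continuous (fderiv ℝ fun y => K y * g y) :=
    (hK.mul hg).continuous_fderiv one_ne_zero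
  refine ((hKw.const_mul M).add (hK'w.const_mul N)).mono'
    (hKg'.norm.mul hw.norm).aestronglyMeasurable (.of_forall fun x => ?_)
  have hle : ‖fderiv ℝ (fun y => K y * g y) x‖ ≤ ‖K x‖ * M + N * ‖fderiv ℝ K x‖ := by
    rw [fderiv_fun_mul (hK.differentiable one_ne_zero x) (hg.differentiable one_ne_zero x)]
    refine norm_add_le_of_le ?_ ?_ <;> rw [norm_smul] <;> gcongr
    exacts [hg'_le x, hg_le x]
  calc ‖‖fderiv ℝ (fun y => K y * g y) x‖ * ‖w x‖‖
      = ‖fderiv ℝ (fun y => K y * g y) x‖ * ‖w x‖ := by rw [norm_mul, norm_norm, norm_norm]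
    _ ≤ (‖K x‖ * M + N * ‖fderiv ℝ K x‖) * ‖w x‖ := by gcongr
    _ = M * (‖K x‖ * ‖w x‖) + N * (‖fderiv ℝ K x‖ * ‖w x‖) := by ring

variable [FiniteDimensional ℝ E] [μ.IsAddHaarMeasure]

theorem integral_fderiv_eq_zero {V : E → F} (hV : Differentiable ℝ V) (hV_int : Integrable V μ)
    (hV'_int : Integrable (fderiv ℝ V) μ) : ∫ x, fderiv ℝ V x ∂μ = 0 := by
  ext v
  have hparts := integral_smul_fderiv_eq_neg_fderiv_smul_of_integrable (μ := μ) (𝕜 := ℝ)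
    (f := fun _ => 1) (g := V) (v := v) (by simp)
    (by simpa using hV'_int.apply_continuousLinearMap v) (by simpa using hV_int)
    (fun _ _ => differentiableAt_const 1) (fun x _ => hV x)
  simpa [ContinuousLinearMap.integral_apply hV'_int] using hparts

theorem integral_divergence_eq_zero {V : E → E} (hV : Differentiable ℝ V)
    (hV_int : Integrable V μ) (hV'_int : Integrable (fderiv ℝ V) μ) :
    ∫ x, divergence V x ∂μ = 0 := by
  let trace : (E →L[ℝ] E) →L[ℝ] ℝ :=
    (LinearMap.trace ℝ E ∘ₗ ContinuousLinearMap.coeLM ℝ).toContinuousLinearMap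
  calc ∫ x, divergence V x ∂μ = trace (∫ x, fderiv ℝ V x ∂μ) := trace.integral_comp_comm hV'_int
    _ = 0 := by rw [integral_fderiv_eq_zero hV hV_int hV'_int, map_zero]

theorem integral_fderiv_apply_eq_zero_of_divergence_eq_zero {φ : E → ℝ} {w : E → E}
    (hφ : ContDiff ℝ 1 φ) (hw : ContDiff ℝ 1 w) (hdiv : ∀ x, divergence w x = 0)
    (hφw : Integrable (fun x => ‖φ x‖ * ‖w x‖) μ)
    (hφ'w : Integrable (fun x => ‖fderiv ℝ φ x‖ * ‖w x‖) μ)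
    (hφw' : Integrable (fun x => ‖φ x‖ * ‖fderiv ℝ w x‖) μ) :
    ∫ x, fderiv ℝ φ x (w x) ∂μ = 0 := by
  have hφd : Differentiable ℝ φ := hφ.differentiable one_ne_zero
  have hwd : Differentiable ℝ w := hw.differentiable one_ne_zero
  have hV : ContDiff ℝ 1 fun x => φ x • w x := hφ.smul hw
  have hV_int : Integrable (fun x => φ x • w x) μ :=
    hφw.mono' hV.continuous.aestronglyMeasurable (.of_forall fun x => (norm_smul _ _).le)
  have hV'_int : Integrable (fderiv ℝ fun x => φ x • w x) μ := by
    refine (hφw'.add hφ'w).mono' (hV.continuous_fderiv one_ne_zero).aestronglyMeasurable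
      (.of_forall fun x => ?_)
    rw [fderiv_fun_smul (hφd x) (hwd x)]
    exact (norm_add_le _ _).trans_eq (by simp [norm_smul])
  calc ∫ x, fderiv ℝ φ x (w x) ∂μ = ∫ x, divergence (fun y => φ y • w y) x ∂μ := by
        simp only [divergence_smul (hφd _) (hwd _), hdiv, mul_zero, zero_add]
    _ = 0 := integral_divergence_eq_zero (hV.differentiable one_ne_zero) hV_int hV'_int

theorem integral_mul_fderiv_apply_eq_neg_of_divergence_eq_zero {K g : E → ℝ} {w : E → E} {N M : ℝ}
    (hK : ContDiff ℝ 1 K) (hg : ContDiff ℝ 1 g) (hw : ContDiff ℝ 1 w)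
    (hdiv : ∀ x, divergence w x = 0) (hg_le : ∀ x, ‖g x‖ ≤ N) (hg'_le : ∀ x, ‖fderiv ℝ g x‖ ≤ M)
    (hKw : Integrable (fun x => ‖K x‖ * ‖w x‖) μ)
    (hK'w : Integrable (fun x => ‖fderiv ℝ K x‖ * ‖w x‖) μ)
    (hKw' : Integrable (fun x => ‖K x‖ * ‖fderiv ℝ w x‖) μ) :
    ∫ x, K x * fderiv ℝ g x (w x) ∂μ = -∫ x, fderiv ℝ K x (w x) * g x ∂μ := by
  have hg_norm : AEStronglyMeasurable (fun x => ‖g x‖) μ := hg.continuous.norm.aestronglyMeasurable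
  have hg_norm_le : ∀ᵐ x ∂μ, ‖‖g x‖‖ ≤ N := .of_forall fun x => (norm_norm _).trans_le (hg_le x)
  have hKgw : Integrable (fun x => ‖K x * g x‖ * ‖w x‖) μ := by
    simpa only [norm_mul, mul_right_comm] using hKw.mul_bdd hg_norm hg_norm_le
  have hKgw' : Integrable (fun x => ‖K x * g x‖ * ‖fderiv ℝ w x‖) μ := by
    simpa only [norm_mul, mul_right_comm] using hKw'.mul_bdd hg_norm hg_norm_le
  have hKdg : Integrable (fun x => K x * fderiv ℝ g x (w x)) μ :=
    integrable_mul_clm_apply hK.continuous (hg.continuous_fderiv one_ne_zero) hw.continuous hg'_le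
      hKw
  have hdKg : Integrable (fun x => fderiv ℝ K x (w x) * g x) μ := by
    have hK' : Continuous (fderiv ℝ K) := hK.continuous_fderiv one_ne_zero
    exact (hK'w.mono' (hK'.clm_apply hw.continuous).aestronglyMeasurable
      (.of_forall fun x => (fderiv ℝ K x).le_opNorm _)).mul_bdd
      hg.continuous.aestronglyMeasurable (.of_forall hg_le)
  rw [eq_neg_iff_add_eq_zero, ← integral_add hKdg hdKg,
    ← integral_fderiv_apply_eq_zero_of_divergence_eq_zero (hK.mul hg) hw hdiv hKgw
      (integrable_norm_fderiv_mul_mul_norm hK hg hw.continuous hg_le hg'_le hKw hK'w) hKgw']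
  simp [fderiv_fun_mul (hK.differentiable one_ne_zero _) (hg.differentiable one_ne_zero _),
    mul_comm]

end IntegrationByParts

section Convolution

variable {E F : Type*} [NormedAddCommGroup E] [NormedSpace ℝ E] [FiniteDimensional ℝ E]
  [MeasurableSpace E] [BorelSpace E] [NormedAddCommGroup F] [NormedSpace ℝ F] {μ : Measure E}

theorem convolutionExists_lsmul_of_norm_le {K : E → ℝ} {g : E → F} {N : ℝ} (hK : Integrable K μ)
    (hg : Continuous g) (hg_le : ∀ z, ‖g z‖ ≤ N) : ConvolutionExists K g (lsmul ℝ ℝ) μ := fun _ =>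
  hK.smul_bdd N (by fun_prop) (.of_forall fun _ => hg_le _)

theorem hasFDerivAt_convolution_lsmul_of_norm_le {K : E → ℝ} {f : E → F} {N M : ℝ}
    (hK : Integrable K μ) (hf : ContDiff ℝ 1 f) (hf_le : ∀ z, ‖f z‖ ≤ N)
    (hf'_le : ∀ z, ‖fderiv ℝ f z‖ ≤ M) (x : E) :
    HasFDerivAt (K ⋆[lsmul ℝ ℝ, μ] f) ((K ⋆[lsmul ℝ ℝ, μ] fderiv ℝ f) x) x := by
  have hexists := convolutionExists_lsmul_of_norm_le hK hf.continuous hf_le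
  have hexists' := convolutionExists_lsmul_of_norm_le hK (hf.continuous_fderiv one_ne_zero) hf'_le
  refine hasFDerivAt_integral_of_dominated_of_fderiv_le (s := Set.univ)
    (F' := fun z y => K y • fderiv ℝ f (z - y)) (bound := fun y => ‖K y‖ * M) Filter.univ_mem
    (.of_forall fun z => (hexists z).aestronglyMeasurable) (hexists x)
    (hexists' x).aestronglyMeasurable (.of_forall fun y z _ => ?_) (hK.norm.mul_const M)
    (.of_forall fun y z _ => ?_)
  · rw [norm_smul]
    gcongr
    exact hf'_le _
  · exact ((hasFDerivAt_comp_sub y).2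
      (hf.differentiable one_ne_zero (z - y)).hasFDerivAt).const_smul (K y)

end Convolution

section Commutator

variable {E : Type*} [NormedAddCommGroup E] [NormedSpace ℝ E] [MeasurableSpace E] {μ : Measure E}
  {K f : E → ℝ} {u : E → E} {S N M : ℝ}

theorem norm_integral_fderiv_increment_mul_le (hu : Differentiable ℝ u)
    (hu_le : ∀ z, ‖fderiv ℝ u z‖ ≤ S) (hf_le : ∀ z, ‖f z‖ ≤ N)
    (hK'_mom : Integrable (fun y => ‖y‖ * ‖fderiv ℝ K y‖) μ) (x : E) :
    ‖∫ y, fderiv ℝ K y (u (x - y) - u x) * f (x - y) ∂μ‖ ≤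
      (∫ y, ‖y‖ * ‖fderiv ℝ K y‖ ∂μ) * S * N := by
  rw [mul_assoc, ← integral_mul_const]
  refine norm_integral_le_of_norm_le (hK'_mom.mul_const _) (.of_forall fun y => ?_)
  have hw_le : ‖u (x - y) - u x‖ ≤ S * ‖y‖ := norm_sub_le_mul_of_norm_fderiv_le hu hu_le x y
  calc ‖fderiv ℝ K y (u (x - y) - u x) * f (x - y)‖
      ≤ ‖fderiv ℝ K y‖ * (S * ‖y‖) * N := by
        rw [norm_mul]
        exact mul_le_mul ((fderiv ℝ K y).le_opNorm_of_le hw_le) (hf_le _) (norm_nonneg _)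
          (mul_nonneg (norm_nonneg _) ((norm_nonneg _).trans hw_le))
    _ = ‖y‖ * ‖fderiv ℝ K y‖ * (S * N) := by ring

variable [FiniteDimensional ℝ E] [BorelSpace E]

theorem integrable_mul_norm_increment {F : Type*} [NormedAddCommGroup F] {a : E → F}
    (ha : Continuous a) (ha_mom : Integrable (fun y => ‖y‖ * ‖a y‖) μ)
    (hu : Differentiable ℝ u) (hu_le : ∀ z, ‖fderiv ℝ u z‖ ≤ S) (x : E) :
    Integrable (fun y => ‖a y‖ * ‖u (x - y) - u x‖) μ := by
  have hu0 : Continuous u := hu.continuous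
  refine (ha_mom.mul_const S).mono' (by fun_prop) (.of_forall fun y => ?_)
  rw [norm_mul, norm_norm, norm_norm]
  calc ‖a y‖ * ‖u (x - y) - u x‖ ≤ ‖a y‖ * (S * ‖y‖) := by
        gcongr
        exact norm_sub_le_mul_of_norm_fderiv_le hu hu_le x y
    _ = ‖y‖ * ‖a y‖ * S := by ring

theorem convolution_transport_sub_fderiv_convolution (hK : Continuous K) (hK_int : Integrable K μ)
    (hK_mom : Integrable (fun y => ‖y‖ * ‖K y‖) μ) (hu : Differentiable ℝ u)
    (hu_le : ∀ z, ‖fderiv ℝ u z‖ ≤ S) (hf : ContDiff ℝ 1 f) (hf_le : ∀ z, ‖f z‖ ≤ N)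
    (hf'_le : ∀ z, ‖fderiv ℝ f z‖ ≤ M) (x : E) :
    (K ⋆[lsmul ℝ ℝ, μ] fun z => fderiv ℝ f z (u z)) x - fderiv ℝ (K ⋆[lsmul ℝ ℝ, μ] f) x (u x) =
      ∫ y, K y * fderiv ℝ f (x - y) (u (x - y) - u x) ∂μ := by
  have hf' : Continuous (fderiv ℝ f) := hf.continuous_fderiv one_ne_zero
  have hu0 : Continuous u := hu.continuous
  have hincrement : Integrable (fun y => K y * fderiv ℝ f (x - y) (u (x - y) - u x)) μ :=
    integrable_mul_clm_apply hK (by fun_prop) (by fun_prop) (fun _ => hf'_le _)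
      (integrable_mul_norm_increment hK hK_mom hu hu_le x)
  have hfrozen : Integrable (fun y => K y * fderiv ℝ f (x - y) (u x)) μ :=
    integrable_mul_clm_apply hK (by fun_prop) continuous_const (fun _ => hf'_le _)
      (hK_int.norm.mul_const _)
  have hfderiv : fderiv ℝ (K ⋆[lsmul ℝ ℝ, μ] f) x (u x) =
      ∫ y, K y * fderiv ℝ f (x - y) (u x) ∂μ := by
    rw [(hasFDerivAt_convolution_lsmul_of_norm_le hK_int hf hf_le hf'_le x).fderiv]
    exact ContinuousLinearMap.integral_apply
      (convolutionExists_lsmul_of_norm_le hK_int hf' hf'_le x) _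
  rw [hfderiv, sub_eq_iff_eq_add, ← integral_add hincrement hfrozen, convolution_lsmul]
  simp only [smul_eq_mul, map_sub, mul_sub, sub_add_cancel]

theorem integral_mul_fderiv_increment_eq [μ.IsAddHaarMeasure] (hK : ContDiff ℝ 1 K)
    (hK_int : Integrable K μ) (hK_mom : Integrable (fun y => ‖y‖ * ‖K y‖) μ)
    (hK'_mom : Integrable (fun y => ‖y‖ * ‖fderiv ℝ K y‖) μ) (hu : ContDiff ℝ 1 u)
    (hdiv : ∀ z, divergence u z = 0) (hu_le : ∀ z, ‖fderiv ℝ u z‖ ≤ S) (hf : ContDiff ℝ 1 f)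
    (hf_le : ∀ z, ‖f z‖ ≤ N) (hf'_le : ∀ z, ‖fderiv ℝ f z‖ ≤ M) (x : E) :
    ∫ y, K y * fderiv ℝ f (x - y) (u (x - y) - u x) ∂μ =
      ∫ y, fderiv ℝ K y (u (x - y) - u x) * f (x - y) ∂μ := by
  have hfd : Differentiable ℝ f := hf.differentiable one_ne_zero
  have hud : Differentiable ℝ u := hu.differentiable one_ne_zero
  have hw : ContDiff ℝ 1 fun y => u (x - y) - u x := by fun_prop
  have hw' (y : E) : fderiv ℝ (fun y => u (x - y) - u x) y = -fderiv ℝ u (x - y) := by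
    rw [fderiv_sub_const, fderiv_comp_const_sub_eq_neg hud]
  have hg' (y : E) : fderiv ℝ (fun y => f (x - y)) y = -fderiv ℝ f (x - y) :=
    fderiv_comp_const_sub_eq_neg hfd x y
  have hKw' : Integrable (fun y => ‖K y‖ * ‖fderiv ℝ (fun y => u (x - y) - u x) y‖) μ :=
    hK_int.norm.mul_bdd (hw.continuous_fderiv one_ne_zero).norm.aestronglyMeasurable
      (.of_forall fun y => by rw [norm_norm, hw', norm_neg]; exact hu_le _)
  have hparts := integral_mul_fderiv_apply_eq_neg_of_divergence_eq_zero hK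
    (g := fun y => f (x - y)) (by fun_prop) hw
    (fun y => by rw [divergence_comp_const_sub_sub_const hud, hdiv, neg_zero]) (fun _ => hf_le _)
    (fun y => by rw [hg', norm_neg]; exact hf'_le _)
    (integrable_mul_norm_increment hK.continuous hK_mom hud hu_le x)
    (integrable_mul_norm_increment (hK.continuous_fderiv one_ne_zero) hK'_mom hud hu_le x) hKw'
  simpa only [hg', neg_apply, mul_neg, integral_neg, neg_inj] using hparts

theorem convolution_transport_commutator_general [μ.IsAddHaarMeasure] (hK : ContDiff ℝ 1 K)
    (hK_int : Integrable K μ) (hK_mom : Integrable (fun y => ‖y‖ * ‖K y‖) μ)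
    (hK'_mom : Integrable (fun y => ‖y‖ * ‖fderiv ℝ K y‖) μ) (hu : ContDiff ℝ 1 u)
    (hdiv : ∀ z, divergence u z = 0) (hu_le : ∀ z, ‖fderiv ℝ u z‖ ≤ S) (hf : ContDiff ℝ 1 f)
    (hf_le : ∀ z, ‖f z‖ ≤ N) (hf'_le : ∀ z, ‖fderiv ℝ f z‖ ≤ M) (x : E) :
    ‖(K ⋆[lsmul ℝ ℝ, μ] fun z => fderiv ℝ f z (u z)) x -
        fderiv ℝ (K ⋆[lsmul ℝ ℝ, μ] f) x (u x)‖ ≤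
      (∫ y, ‖y‖ * ‖fderiv ℝ K y‖ ∂μ) * S * N := by
  rw [convolution_transport_sub_fderiv_convolution hK.continuous hK_int hK_mom
      (hu.differentiable one_ne_zero) hu_le hf hf_le hf'_le,
    integral_mul_fderiv_increment_eq hK hK_int hK_mom hK'_mom hu hdiv hu_le hf hf_le hf'_le]
  exact norm_integral_fderiv_increment_mul_le (hu.differentiable one_ne_zero) hu_le hf_le hK'_mom x

theorem convolution_transport_commutator_of_periodic [μ.IsAddHaarMeasure] {ι : Type*} [Finite ι]
    (b : Module.Basis ι ℝ E) (hK : ContDiff ℝ 1 K) (hK_int : Integrable K μ)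
    (hK_mom : Integrable (fun y => ‖y‖ * ‖K y‖) μ)
    (hK'_mom : Integrable (fun y => ‖y‖ * ‖fderiv ℝ K y‖) μ) (hu : ContDiff ℝ 1 u)
    (hdiv : ∀ z, divergence u z = 0) (hu_per : ∀ i, Function.Periodic u (b i))
    (hf : ContDiff ℝ 1 f) (hf_per : ∀ i, Function.Periodic f (b i)) (x : E) :
    ‖(K ⋆[lsmul ℝ ℝ, μ] fun z => fderiv ℝ f z (u z)) x -
        fderiv ℝ (K ⋆[lsmul ℝ ℝ, μ] f) x (u x)‖ ≤
      (∫ y, ‖y‖ * ‖fderiv ℝ K y‖ ∂μ) * (⨆ z, ‖fderiv ℝ u z‖) * (⨆ z, ‖f z‖) := by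
  have hu'_bdd := bddAbove_range_norm_of_continuous_of_periodic b
    (hu.continuous_fderiv one_ne_zero) fun i => periodic_fderiv (hu_per i)
  have hf_bdd := bddAbove_range_norm_of_continuous_of_periodic b hf.continuous hf_per
  have hf'_bdd := bddAbove_range_norm_of_continuous_of_periodic b
    (hf.continuous_fderiv one_ne_zero) fun i => periodic_fderiv (hf_per i)
  exact convolution_transport_commutator_general hK hK_int hK_mom hK'_mom hu hdiv
    (le_ciSup hu'_bdd) hf (le_ciSup hf_bdd) (le_ciSup hf'_bdd) x

end Commutator

/-- Commutator estimate between `u·∇` and a convolution operator `T_K` of order `s`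
localized at length scale `λ⁻¹`:
`‖[u·∇, T_K] f‖_{C⁰} ≤ C C₀ λ^s ‖∇u‖_{C⁰} ‖f‖_{C⁰}` for divergence-free `u`. -/
theorem convolution_transport_commutator :
    ∃ C : ℝ, ∀ (s lam C₀ : ℝ), 1 ≤ lam → 0 < C₀ →
      ∀ (K : E2 → ℝ) (u : E2 → E2) (f : E2 → ℝ),
      ContDiff ℝ 1 K →
      Integrable K →
      Integrable (fun x => ‖x‖ * |K x|) →
      Integrable (fun x => ‖fderiv ℝ K x‖) →
      Integrable (fun x => ‖x‖ * ‖fderiv ℝ K x‖) →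
      (∫ x, |K x|) ≤ C₀ * lam ^ s →
      (∫ x, ‖x‖ * |K x|) ≤ C₀ * lam ^ (s - 1) →
      (∫ x, ‖fderiv ℝ K x‖) ≤ C₀ * lam ^ (s + 1) →
      (∫ x, ‖x‖ * ‖fderiv ℝ K x‖) ≤ C₀ * lam ^ s →
      ContDiff ℝ (⊤ : ℕ∞) u →
      (∀ (x : E2) (i : Fin 2), u (x + (2 * π) • EuclideanSpace.single i 1) = u x) →
      (∀ x : E2, ∑ j : Fin 2, fderiv ℝ (fun y => u y j) x (EuclideanSpace.single j 1) = 0) →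
      ContDiff ℝ (⊤ : ℕ∞) f →
      (∀ (x : E2) (i : Fin 2), f (x + (2 * π) • EuclideanSpace.single i 1) = f x) →
      ∀ x : E2,
        |(∫ y, K y * fderiv ℝ f (x - y) (u (x - y))) -
            fderiv ℝ (fun z => ∫ y, K y * f (z - y)) x (u x)|
          ≤ C * C₀ * lam ^ s * (⨆ z : E2, ‖fderiv ℝ u z‖) * (⨆ z : E2, |f z|) := by
  refine ⟨1, fun s lam C₀ _ _ K u f hK hK_int hK_mom _ hK'_mom _ _ _ hK'_le hu hu_per hu_div hf
    hf_per x => ?_⟩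
  have hdiv (z : E2) : divergence u z = 0 :=
    (divergence_eq_sum_single (hu.differentiable (by simp) z)).trans (hu_div z)
  have hu_per' (i : Fin 2) : Function.Periodic u (twoPiBasis (Fin 2) i) := fun z => by
    rw [twoPiBasis_apply, hu_per]
  have hf_per' (i : Fin 2) : Function.Periodic f (twoPiBasis (Fin 2) i) := fun z => by
    rw [twoPiBasis_apply, hf_per]
  calc _ ≤ (∫ y, ‖y‖ * ‖fderiv ℝ K y‖) * (⨆ z : E2, ‖fderiv ℝ u z‖) * (⨆ z : E2, |f z|) :=
        convolution_transport_commutator_of_periodic _ hK hK_int hK_mom hK'_mom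
          (hu.of_le (by simp)) hdiv hu_per' (hf.of_le (by simp)) hf_per' x
    _ ≤ _ := by
        rw [one_mul]
        gcongr
        · exact Real.iSup_nonneg fun z => abs_nonneg _
        · exact Real.iSup_nonneg fun z => norm_nonneg _
end
end
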